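/- Let g be a continuous complex-valued function on the closed unit disk with sup_{z∈𝔻}|g(z)| ≤ M₁, and let G_g(z) = (1/(2π))∫_𝔻 G(z,w) g(w) dA(w). Then for every z ∈ 𝔻 \ {0}: |∂G_g/∂z (z) − ∂G_g/∂z (0)| ≤ M₁·[log(4(1+|z|)) − log|z|]·|z|(2+|z|), and the same bound holds for |∂G_g/∂z̄ (z) − ∂G_g/∂z̄ (0)|. -/

import Mathlib

open Metric MeasureTheory Set Filter

noncomputable section

/-- The Wirtinger derivative `∂f/∂z = (f_x - i f_y)/2`. -/
def wdz (f : ℂ → ℂ) (z : ℂ) : ℂ :=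
  (fderiv ℝ f z 1 - Complex.I * fderiv ℝ f z Complex.I) / 2

/-- The Wirtinger derivative `∂f/∂z̄ = (f_x + i f_y)/2`. -/
def wdzbar (f : ℂ → ℂ) (z : ℂ) : ℂ :=
  (fderiv ℝ f z 1 + Complex.I * fderiv ℝ f z Complex.I) / 2

/-- The Laplacian `Δf = f_xx + f_yy` (equivalently `4 f_{z z̄}`). -/
def lap (f : ℂ → ℂ) (z : ℂ) : ℂ :=
  fderiv ℝ (fun w => fderiv ℝ f w 1) z 1 +
    fderiv ℝ (fun w => fderiv ℝ f w Complex.I) z Complex.I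

/-- The Poisson integral `P_ψ(z) = (1/2π) ∫₀^{2π} ((1-|z|²)/|1-z e^{-it}|²) ψ(e^{it}) dt`. -/
def poissonIntegral (ψ : ℂ → ℂ) (z : ℂ) : ℂ :=
  (1 / (2 * Real.pi) : ℝ) • ∫ t in (0:ℝ)..(2 * Real.pi),
    (((1 - ‖z‖ ^ 2) / ‖1 - z * Complex.exp (-(Complex.I * (t : ℂ)))‖ ^ 2 : ℝ) : ℂ) *
      ψ (Complex.exp (Complex.I * (t : ℂ)))

/-- The Green potential `G_g(z) = (1/2π) ∫_𝔻 log|(1 - z w̄)/(z - w)| g(w) dA(w)`. -/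
def greenPotential (g : ℂ → ℂ) (z : ℂ) : ℂ :=
  (1 / (2 * Real.pi) : ℝ) • ∫ w in ball (0:ℂ) 1,
    ((Real.log ‖(1 - z * (starRingEnd ℂ) w) / (z - w)‖ : ℝ) : ℂ) * g w

/-- `sup_{z ∈ 𝔻} |g(z)|`. -/
def supD (g : ℂ → ℂ) : ℝ := sSup ((fun z => ‖g z‖) '' ball (0:ℂ) 1)

/-- The function `μ(r)` with constant `c` in place of `‖g‖_∞`. -/
def mu (c r : ℝ) : ℝ :=
  c * (1 - r ^ 2) / (8 * r ^ 2) *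
    ((1 + r ^ 2) / (1 - r ^ 2) - (1 - r ^ 2) / (2 * r) * Real.log ((1 + r) / (1 - r)))

theorem est_real (a k : ℂ) (ha : a ≠ 0) (hak : a + k ≠ 0) :
    |Real.log ‖a + k‖ - Real.log ‖a‖| ≤ ‖k‖ / ‖a‖ + ‖k‖ / ‖a + k‖ := by
  have h1 : 0 < ‖a‖ := norm_pos_iff.2 ha
  have h2 : 0 < ‖a + k‖ := norm_pos_iff.2 hak
  have h3 : ‖a + k‖ ≤ ‖a‖ + ‖k‖ := norm_add_le _ _
  have h4 : ‖a‖ ≤ ‖a + k‖ + ‖k‖ := by simpa using norm_sub_le (a + k) k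
  have e1 := Real.log_le_sub_one_of_pos (div_pos h2 h1)
  have e2 := Real.log_le_sub_one_of_pos (div_pos h1 h2)
  rw [Real.log_div h2.ne' h1.ne'] at e1
  rw [Real.log_div h1.ne' h2.ne'] at e2
  have p1 : ‖a + k‖ / ‖a‖ - 1 ≤ ‖k‖ / ‖a‖ := by
    rw [div_sub_one h1.ne']; gcongr; linarith
  have p2 : ‖a‖ / ‖a + k‖ - 1 ≤ ‖k‖ / ‖a + k‖ := by
    rw [div_sub_one h2.ne']; gcongr; linarith
  have q1 : 0 ≤ ‖k‖ / ‖a‖ := by positivity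
  have q2 : 0 ≤ ‖k‖ / ‖a + k‖ := by positivity
  rw [abs_le]; constructor <;> linarith

/-- x ≤ 3 x^{3/2} for x ≥ 1/3 -/
theorem pw1 (x : ℝ) (hx : 1 / 3 ≤ x) : x ≤ 3 * x ^ (3 / 2 : ℝ) := by
  have h0 : 0 < x := by linarith
  have : x ^ (3 / 2 : ℝ) = x * Real.sqrt x := by
    rw [Real.sqrt_eq_rpow, ← Real.rpow_one_add' h0.le (by norm_num)]; norm_num
  rw [this]
  have : 1 / 3 ≤ Real.sqrt x := by apply Real.le_sqrt_of_sq_le; linarith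
  nlinarith

theorem pw2 (x : ℝ) (hx : x ≤ 1) (h0 : 0 ≤ x) : x ^ 2 ≤ x ^ (3 / 2 : ℝ) := by
  rcases h0.eq_or_lt with rfl | h0
  · simp
  rw [← Real.rpow_natCast]
  exact Real.rpow_le_rpow_of_exponent_ge h0 hx (by norm_num)

theorem est (a k : ℂ) (ha : a ≠ 0) (hak : a + k ≠ 0) :
    |Real.log ‖a + k‖ - Real.log ‖a‖ - (k / a).re| ≤
      6 * (‖k‖ ^ (3 / 2 : ℝ) * (‖a‖ ^ (-3 / 2 : ℝ) + ‖a + k‖ ^ (-3 / 2 : ℝ))) := by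
  have h1 : 0 < ‖a‖ := norm_pos_iff.2 ha
  have h2 : 0 < ‖a + k‖ := norm_pos_iff.2 hak
  have key : ∀ y : ℝ, 0 < y → (‖k‖ / y) ^ (3 / 2 : ℝ) = ‖k‖ ^ (3 / 2 : ℝ) * y ^ (-3 / 2 : ℝ) := by
    intro y hy
    rw [Real.div_rpow (norm_nonneg _) hy.le, div_eq_mul_inv, ← Real.rpow_neg hy.le]
    norm_num
  rw [mul_add, ← key _ h1, ← key _ h2]
  have q1 : 0 ≤ (‖k‖ / ‖a‖) ^ (3 / 2 : ℝ) := by positivity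
  have q2 : 0 ≤ (‖k‖ / ‖a + k‖) ^ (3 / 2 : ℝ) := by positivity
  have hre : |(k / a).re| ≤ ‖k‖ / ‖a‖ := by
    rw [← norm_div]; exact Complex.abs_re_le_norm _
  rcases le_total (‖k‖ / ‖a‖) (1 / 2) with h | h
  · have hn : ‖k / a‖ ≤ 1 / 2 := by rwa [norm_div]
    have hb := Complex.norm_log_one_add_sub_self_le (z := k / a) (by linarith)
    have hr := (Complex.abs_re_le_norm _).trans hb
    rw [Complex.sub_re, Complex.log_re] at hr
    have e : (1 + k / a) = (a + k) / a := by field_simp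
    rw [e, norm_div, Real.log_div h2.ne' h1.ne'] at hr
    refine hr.trans ?_
    have h3 : (1 - ‖k / a‖)⁻¹ ≤ 2 := by
      rw [inv_le_comm₀] <;> linarith
    have h4 := pw2 ‖k / a‖ (by linarith) (norm_nonneg _)
    rw [← norm_div k a] at q1 ⊢
    have : 0 ≤ ‖k/a‖^2 := by positivity
    nlinarith
  · have hk : ‖a‖ ≤ 2 * ‖k‖ := by
      rw [div_le_div_iff₀ (by norm_num) h1] at h; linarith
    have h3 : ‖a + k‖ ≤ ‖a‖ + ‖k‖ := norm_add_le _ _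
    have h5 : 1 / 3 ≤ ‖k‖ / ‖a + k‖ := by
      rw [div_le_div_iff₀ (by norm_num) h2]; linarith
    have := pw1 _ h5
    have := pw1 (‖k‖ / ‖a‖) (by linarith)
    have := est_real a k ha hak
    have := abs_sub (Real.log ‖a + k‖ - Real.log ‖a‖) (k / a).re
    linarith

theorem radial (φ : ℝ → ℝ) (h : IntegrableOn (fun y => y * φ y) (Ioo 0 2)) :
    IntegrableOn (fun w : ℂ => φ ‖w‖) (ball 0 2) ∧
    ∫ w in ball (0:ℂ) 2, φ ‖w‖ = 2 * Real.pi * ∫ y in Ioo (0:ℝ) 2, y * φ y := by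
  have e : (ball (0:ℂ) 2).indicator (fun w : ℂ => φ ‖w‖) =
      fun w => (Iio (2:ℝ)).indicator φ ‖w‖ := by
    ext w; simp [indicator]
  have e2 : ∀ y : ℝ, y * (Iio (2:ℝ)).indicator φ y = (Iio (2:ℝ)).indicator (fun y => y * φ y) y := by
    intro y; simp [indicator]
  have e3 : Ioi (0:ℝ) ∩ Iio 2 = Ioo 0 2 := rfl
  constructor
  · rw [← integrable_indicator_iff measurableSet_ball, e, integrable_fun_norm_addHaar]
    simp only [Complex.finrank_real_complex, Nat.add_one_sub_one, pow_one, smul_eq_mul, e2]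
    rw [IntegrableOn, integrable_indicator_iff measurableSet_Iio, IntegrableOn, Measure.restrict_restrict measurableSet_Iio, inter_comm]
    exact h
  · rw [← integral_indicator measurableSet_ball, e, integral_fun_norm_addHaar]
    simp only [Complex.finrank_real_complex, Nat.add_one_sub_one, pow_one, smul_eq_mul, e2]
    rw [setIntegral_indicator measurableSet_Iio, e3]
    simp [Measure.real, Complex.volume_ball]
    ring

theorem radial_le (φ : ℝ → ℝ) (h0 : ∀ y, 0 ≤ y → 0 ≤ φ y) (h : IntegrableOn (fun y => y * φ y) (Ioo 0 2))
    (z : ℂ) (hz : z ∈ ball (0:ℂ) 1) :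
    IntegrableOn (fun w : ℂ => φ ‖z - w‖) (ball 0 1) ∧
    ∫ w in ball (0:ℂ) 1, φ ‖z - w‖ ≤ 2 * Real.pi * ∫ y in Ioo (0:ℝ) 2, y * φ y := by
  obtain ⟨h1, h2⟩ := radial φ h
  have mp := Measure.measurePreserving_sub_left (volume : Measure ℂ) z
  have me : MeasurableEmbedding (fun w : ℂ => z - w) := (MeasurableEquiv.subLeft z).measurableEmbedding
  have pre : (fun w : ℂ => z - w) ⁻¹' (ball 0 2) = ball z 2 := by
    ext w; simp [dist_eq_norm, norm_sub_rev]
  have i1 : IntegrableOn (fun w : ℂ => φ ‖z - w‖) (ball z 2) := by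
    rw [← pre]; exact (mp.integrableOn_comp_preimage me).2 h1
  have i2 := mp.setIntegral_preimage_emb me (fun w => φ ‖w‖) (ball 0 2)
  rw [pre] at i2
  have sub : ball (0:ℂ) 1 ⊆ ball z 2 := by
    apply ball_subset_ball'
    rw [mem_ball] at hz; rw [dist_comm]; linarith
  refine ⟨i1.mono_set sub, ?_⟩
  rw [← h2, ← i2]
  exact setIntegral_mono_set i1 (ae_of_all _ fun w => h0 _ (norm_nonneg _)) sub.eventuallyLE

theorem rad1 : IntegrableOn (fun y : ℝ => y * y ^ (-3 / 2 : ℝ)) (Ioo 0 2) := by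
  have : IntegrableOn (fun y : ℝ => y ^ (-1 / 2 : ℝ)) (Ioo 0 2) := by
    have := intervalIntegral.intervalIntegrable_rpow' (a := 0) (b := 2) (r := -1 / 2) (by norm_num)
    rw [intervalIntegrable_iff_integrableOn_Ioo_of_le (by norm_num)] at this
    exact this
  refine this.congr_fun (fun y hy => ?_) measurableSet_Ioo
  simp only
  rw [← Real.rpow_one_add' hy.1.le (by norm_num)]; norm_num

theorem rad2 : IntegrableOn (fun y : ℝ => y * y⁻¹) (Ioo 0 2) ∧ ∫ y in Ioo (0:ℝ) 2, y * y⁻¹ = 2 := by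
  have e : EqOn (fun y : ℝ => y * y⁻¹) (fun _ => 1) (Ioo 0 2) := fun y hy => by
    have : y ≠ 0 := hy.1.ne'
    simp [this]
  constructor
  · refine IntegrableOn.congr_fun ?_ e.symm measurableSet_Ioo
    simp
  · rw [setIntegral_congr_fun measurableSet_Ioo e]; simp

theorem rad3 (r : ℝ) (h0 : 0 < r) (h1 : r < 1) :
    IntegrableOn (fun y : ℝ => y * (y * max y (r / 2))⁻¹) (Ioo 0 2) ∧
    ∫ y in Ioo (0:ℝ) 2, y * (y * max y (r / 2))⁻¹ = 1 + Real.log (4 / r) := by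
  have e : EqOn (fun y : ℝ => y * (y * max y (r / 2))⁻¹) (fun y => (max y (r / 2))⁻¹) (Ioo 0 2) := fun y hy => by
    have : y ≠ 0 := hy.1.ne'
    simp only
    rw [mul_inv, ← mul_assoc, mul_inv_cancel₀ this, one_mul]
  have hc : Continuous (fun y : ℝ => (max y (r / 2))⁻¹) := by
    apply Continuous.inv₀ (by fun_prop)
    intro y; have := le_max_right y (r/2); linarith
  constructor
  · refine IntegrableOn.congr_fun ?_ e.symm measurableSet_Ioo
    exact (hc.integrableOn_Icc).mono_set Ioo_subset_Icc_self
  · rw [setIntegral_congr_fun measurableSet_Ioo e, ← integral_Ioc_eq_integral_Ioo,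
      ← intervalIntegral.integral_of_le (by norm_num),
      ← intervalIntegral.integral_add_adjacent_intervals (b := r / 2) (hc.intervalIntegrable _ _) (hc.intervalIntegrable _ _)]
    congr 1
    · rw [intervalIntegral.integral_congr (g := fun _ => (r/2)⁻¹)]
      · rw [intervalIntegral.integral_const, smul_eq_mul, sub_zero, mul_inv_cancel₀ (by linarith)]
      · intro y hy
        rw [uIcc_of_le (by linarith)] at hy
        simp [hy.2]
    · rw [intervalIntegral.integral_congr (g := fun y => y⁻¹)]
      · rw [integral_inv_of_pos (by linarith) (by norm_num)]; congr 1; field_simp; norm_num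
      · intro y hy
        rw [uIcc_of_le (by linarith)] at hy
        simp [hy.1]

def Ker (z w : ℂ) : ℂ := -(starRingEnd ℂ) w / (1 - z * (starRingEnd ℂ) w) - 1 / (z - w)

theorem key_le (z w : ℂ) (hz : z ∈ ball (0:ℂ) 1) (hw : w ∈ ball (0:ℂ) 1) :
    ‖z - w‖ ≤ ‖1 - z * (starRingEnd ℂ) w‖ := by
  rw [mem_ball_zero_iff] at hz hw
  have h1 : ‖z‖ ^ 2 < 1 := by have := norm_nonneg z; nlinarith
  have h2 : ‖w‖ ^ 2 < 1 := by have := norm_nonneg w; nlinarith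
  apply (sq_le_sq₀ (norm_nonneg _) (norm_nonneg _)).1
  rw [← Complex.normSq_eq_norm_sq] at *
  rw [← Complex.normSq_eq_norm_sq]
  have : 0 < (1 - Complex.normSq z) * (1 - Complex.normSq w) := mul_pos (by linarith) (by linarith)
  simp only [Complex.normSq_apply, Complex.sub_re, Complex.sub_im, Complex.mul_re, Complex.mul_im,
    Complex.conj_re, Complex.conj_im, Complex.one_re, Complex.one_im] at *
  nlinarith

theorem ne0 (z w : ℂ) (hz : z ∈ ball (0:ℂ) 1) (hw : w ∈ ball (0:ℂ) 1) :
    1 - z * (starRingEnd ℂ) w ≠ 0 := by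
  rw [mem_ball_zero_iff] at hz hw
  intro h
  have : z * (starRingEnd ℂ) w = 1 := by linear_combination -h
  have := congrArg norm this
  rw [norm_mul, RCLike.norm_conj, norm_one] at this
  have := norm_nonneg z
  have := norm_nonneg w
  nlinarith

theorem ker_le (z w : ℂ) (hz : z ∈ ball (0:ℂ) 1) (hw : w ∈ ball (0:ℂ) 1) (hne : z ≠ w) :
    ‖Ker z w‖ ≤ 2 * ‖z - w‖⁻¹ := by
  have h1 := key_le z w hz hw
  have h0 : 0 < ‖z - w‖ := norm_pos_iff.2 (sub_ne_zero.2 hne)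
  rw [mem_ball_zero_iff] at hw
  unfold Ker
  refine (norm_sub_le _ _).trans ?_
  rw [norm_div, norm_div, norm_neg, RCLike.norm_conj, norm_one]
  have : ‖w‖ / ‖1 - z * (starRingEnd ℂ) w‖ ≤ 1 / ‖z - w‖ := by gcongr
  rw [one_div] at *
  linarith

theorem log_ker_le (z w : ℂ) (hz : z ∈ ball (0:ℂ) 1) (hw : w ∈ ball (0:ℂ) 1) (hne : z ≠ w) :
    |Real.log ‖(1 - z * (starRingEnd ℂ) w) / (z - w)‖| ≤ 2 * ‖z - w‖⁻¹ := by
  have h1 := key_le z w hz hw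
  have h0 : 0 < ‖z - w‖ := norm_pos_iff.2 (sub_ne_zero.2 hne)
  rw [norm_div]
  have h3 : 1 ≤ ‖1 - z * (starRingEnd ℂ) w‖ / ‖z - w‖ := by
    rw [le_div_iff₀ h0]; linarith
  rw [abs_of_nonneg (Real.log_nonneg h3)]
  have h4 := Real.log_le_self (x := ‖1 - z * (starRingEnd ℂ) w‖ / ‖z - w‖) (by linarith)
  refine h4.trans ?_
  rw [div_eq_mul_inv]
  gcongr
  refine (norm_sub_le _ _).trans ?_
  rw [norm_mul, RCLike.norm_conj, norm_one]
  rw [mem_ball_zero_iff] at hz hw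
  have := norm_nonneg z
  have := norm_nonneg w
  nlinarith

theorem log_est (z h w : ℂ) (hz : z ∈ ball (0:ℂ) 1) (hzh : z + h ∈ ball (0:ℂ) 1)
    (hw : w ∈ ball (0:ℂ) 1) (hne : z ≠ w) (hne' : z + h ≠ w) :
    |Real.log ‖(1 - (z + h) * (starRingEnd ℂ) w) / ((z + h) - w)‖
      - Real.log ‖(1 - z * (starRingEnd ℂ) w) / (z - w)‖ - (h * Ker z w).re| ≤
    12 * (‖h‖ ^ (3 / 2 : ℝ) * (‖z - w‖ ^ (-3 / 2 : ℝ) + ‖z + h - w‖ ^ (-3 / 2 : ℝ))) := by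
  have a1 := ne0 z w hz hw
  have a2 := ne0 (z + h) w hzh hw
  have a3 := key_le z w hz hw
  have a4 := key_le (z + h) w hzh hw
  have b1 := sub_ne_zero.2 hne
  have b2 := sub_ne_zero.2 hne'
  have c1 : (1 - z * (starRingEnd ℂ) w) + (-h * (starRingEnd ℂ) w) = 1 - (z + h) * (starRingEnd ℂ) w := by ring
  have c2 : (z - w) + h = z + h - w := by ring
  have e1 := est (1 - z * (starRingEnd ℂ) w) (-h * (starRingEnd ℂ) w) a1 (by rwa [c1])
  have e2 := est (z - w) h b1 (by rwa [c2])
  rw [c1] at e1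
  rw [c2] at e2
  have n1 : 0 < ‖z - w‖ := norm_pos_iff.2 b1
  have n2 : 0 < ‖z + h - w‖ := norm_pos_iff.2 b2
  have k1 : ‖-h * (starRingEnd ℂ) w‖ ≤ ‖h‖ := by
    rw [norm_mul, RCLike.norm_conj, norm_neg]
    rw [mem_ball_zero_iff] at hw
    exact mul_le_of_le_one_right (norm_nonneg _) hw.le
  have k2 : ‖1 - z * (starRingEnd ℂ) w‖ ^ (-3 / 2 : ℝ) ≤ ‖z - w‖ ^ (-3 / 2 : ℝ) :=
    Real.rpow_le_rpow_of_nonpos n1 a3 (by norm_num)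
  have k3 : ‖1 - (z + h) * (starRingEnd ℂ) w‖ ^ (-3 / 2 : ℝ) ≤ ‖z + h - w‖ ^ (-3 / 2 : ℝ) :=
    Real.rpow_le_rpow_of_nonpos n2 a4 (by norm_num)
  have k4 : ‖-h * (starRingEnd ℂ) w‖ ^ (3 / 2 : ℝ) ≤ ‖h‖ ^ (3 / 2 : ℝ) := by gcongr
  have e3 : 6 * (‖-h * (starRingEnd ℂ) w‖ ^ (3 / 2 : ℝ) * (‖1 - z * (starRingEnd ℂ) w‖ ^ (-3 / 2 : ℝ) + ‖1 - (z + h) * (starRingEnd ℂ) w‖ ^ (-3 / 2 : ℝ)))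
     ≤ 6 * (‖h‖ ^ (3 / 2 : ℝ) * (‖z - w‖ ^ (-3 / 2 : ℝ) + ‖z + h - w‖ ^ (-3 / 2 : ℝ))) := by gcongr
  have c3 : h * Ker z w = (-h * (starRingEnd ℂ) w) / (1 - z * (starRingEnd ℂ) w) - h / (z - w) := by
    unfold Ker; ring
  rw [c3, Complex.sub_re, norm_div, norm_div,
    Real.log_div (norm_ne_zero_iff.2 a2) n2.ne', Real.log_div (norm_ne_zero_iff.2 a1) n1.ne']
  rw [abs_le] at *
  constructor <;> linarith [e1.1, e1.2, e2.1, e2.2]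

def CC : ℝ := 2 * Real.pi * ∫ y in Ioo (0:ℝ) 2, y * y ^ (-3 / 2 : ℝ)

theorem int32 (z : ℂ) (hz : z ∈ ball (0:ℂ) 1) :
    IntegrableOn (fun w : ℂ => ‖z - w‖ ^ (-3 / 2 : ℝ)) (ball 0 1) ∧
    ∫ w in ball (0:ℂ) 1, ‖z - w‖ ^ (-3 / 2 : ℝ) ≤ CC :=
  radial_le (fun y => y ^ (-3 / 2 : ℝ)) (fun y hy => by positivity) rad1 z hz

theorem int1 (z : ℂ) (hz : z ∈ ball (0:ℂ) 1) :
    IntegrableOn (fun w : ℂ => ‖z - w‖⁻¹) (ball 0 1) ∧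
    ∫ w in ball (0:ℂ) 1, ‖z - w‖⁻¹ ≤ 4 * Real.pi := by
  have := radial_le (fun y => y⁻¹) (fun y hy => by positivity) rad2.1 z hz
  rw [rad2.2] at this
  exact ⟨this.1, by linarith [this.2]⟩

theorem ae_ne (z : ℂ) : ∀ᵐ w ∂(volume.restrict (ball (0:ℂ) 1)), w ∈ ball (0:ℂ) 1 ∧ z ≠ w := by
  have h1 := ae_restrict_mem (μ := (volume : Measure ℂ)) (measurableSet_ball (x := (0:ℂ)) (ε := 1))
  have h2 := (Measure.ae_ne (volume.restrict (ball (0:ℂ) 1)) z)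
  filter_upwards [h1, h2] with w a b using ⟨a, b.symm⟩

theorem gmeas (g : ℂ → ℂ) (hg : ContinuousOn g (closedBall (0:ℂ) 1)) :
    AEStronglyMeasurable g (volume.restrict (ball (0:ℂ) 1)) :=
  (hg.mono ball_subset_closedBall).aestronglyMeasurable measurableSet_ball

/-- general domination -/
theorem int_mul (M₁ : ℝ) (g : ℂ → ℂ) (hg : ContinuousOn g (closedBall (0:ℂ) 1))
    (hgb : ∀ z ∈ ball (0:ℂ) 1, ‖g z‖ ≤ M₁) (z : ℂ) (hz : z ∈ ball (0:ℂ) 1) (k : ℂ → ℂ)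
    (hk : Measurable k) (hb : ∀ w ∈ ball (0:ℂ) 1, z ≠ w → ‖k w‖ ≤ 2 * ‖z - w‖⁻¹) :
    IntegrableOn (fun w => k w * g w) (ball (0:ℂ) 1) := by
  have i1 := (((int1 z hz).1.const_mul 2).mul_const M₁)
  refine i1.mono' (hk.aestronglyMeasurable.mul (gmeas g hg)) ?_
  filter_upwards [ae_ne z] with w hw
  rw [norm_mul]
  have := hb w hw.1 hw.2
  have := hgb w hw.1
  gcongr

theorem ker_meas (z : ℂ) : Measurable (Ker z) := by
  unfold Ker
  have : Measurable (starRingEnd ℂ) := Complex.continuous_conj.measurable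
  fun_prop

theorem log_meas (z : ℂ) : Measurable (fun w : ℂ => ((Real.log ‖(1 - z * (starRingEnd ℂ) w) / (z - w)‖ : ℝ) : ℂ)) := by
  have : Measurable (starRingEnd ℂ) := Complex.continuous_conj.measurable
  fun_prop

def AA (g : ℂ → ℂ) (z : ℂ) : ℂ := ∫ w in ball (0:ℂ) 1, Ker z w * g w
def BB (g : ℂ → ℂ) (z : ℂ) : ℂ := ∫ w in ball (0:ℂ) 1, (starRingEnd ℂ) (Ker z w) * g w
def LL (A B : ℂ) : ℂ →L[ℝ] ℂ :=
  (A / 2) • (ContinuousLinearMap.id ℝ ℂ) + (B / 2) • (Complex.conjCLE : ℂ →L[ℝ] ℂ)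

theorem diff_est (M₁ : ℝ) (g : ℂ → ℂ) (hg : ContinuousOn g (closedBall (0:ℂ) 1))
    (hgb : ∀ z ∈ ball (0:ℂ) 1, ‖g z‖ ≤ M₁) (z : ℂ) (hz : z ∈ ball (0:ℂ) 1) (h : ℂ)
    (hzh : z + h ∈ ball (0:ℂ) 1) :
    ‖(∫ w in ball (0:ℂ) 1, ((Real.log ‖(1 - (z + h) * (starRingEnd ℂ) w) / (z + h - w)‖ : ℝ) : ℂ) * g w)
     - (∫ w in ball (0:ℂ) 1, ((Real.log ‖(1 - z * (starRingEnd ℂ) w) / (z - w)‖ : ℝ) : ℂ) * g w)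
     - LL (AA g z) (BB g z) h‖ ≤ (24 * CC * M₁) * ‖h‖ ^ (3 / 2 : ℝ) := by
  have hM : 0 ≤ M₁ := (norm_nonneg _).trans (hgb 0 (by simp))
  have j1 := int_mul M₁ g hg hgb (z + h) hzh _ (log_meas (z + h)) (fun w hw hne => by
    rw [Complex.norm_real]; exact log_ker_le _ _ hzh hw hne)
  have j2 := int_mul M₁ g hg hgb z hz _ (log_meas z) (fun w hw hne => by
    rw [Complex.norm_real]; exact log_ker_le _ _ hz hw hne)
  have j3 := int_mul M₁ g hg hgb z hz _ (ker_meas z) (fun w hw hne => ker_le _ _ hz hw hne)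
  have j4 := int_mul M₁ g hg hgb z hz _ (Complex.continuous_conj.measurable.comp (ker_meas z))
    (fun w hw hne => by simpa using ker_le _ _ hz hw hne)
  simp only [Function.comp] at j4
  have eL : LL (AA g z) (BB g z) h =
      ∫ w in ball (0:ℂ) 1, (h / 2 * (Ker z w * g w) + (starRingEnd ℂ) h / 2 * ((starRingEnd ℂ) (Ker z w) * g w)) := by
    rw [integral_add (j3.const_mul _) (j4.const_mul _), integral_const_mul, integral_const_mul]
    simp [LL, AA, BB]; ring
  have j5 := (j3.const_mul (h / 2)).add (j4.const_mul ((starRingEnd ℂ) h / 2))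
  rw [eL, ← integral_sub j1 j2]
  erw [← integral_sub (j1.sub j2) j5]
  have m1 := int32 z hz
  have m2 := int32 (z + h) hzh
  have m3 := (((m1.1.add m2.1).const_mul (‖h‖ ^ (3 / 2 : ℝ))).const_mul 12).mul_const M₁
  refine (norm_integral_le_of_norm_le m3 ?_).trans ?_
  · filter_upwards [ae_ne z, ae_ne (z + h)] with w h1 h2
    have e := log_est z h w hz hzh h1.1 h1.2 h2.2
    have hgw := hgb w h1.1
    set P := Real.log ‖(1 - (z + h) * (starRingEnd ℂ) w) / ((z + h) - w)‖
    set Q := Real.log ‖(1 - z * (starRingEnd ℂ) w) / (z - w)‖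
    have : (P : ℂ) * g w - (Q : ℂ) * g w - (h / 2 * (Ker z w * g w) + (starRingEnd ℂ) h / 2 * ((starRingEnd ℂ) (Ker z w) * g w))
        = ((P - Q - (h * Ker z w).re : ℝ) : ℂ) * g w := by
      push_cast
      rw [Complex.re_eq_add_conj, map_mul]; ring
    simp only [Pi.add_apply, Pi.sub_apply]
    rw [this, norm_mul, Complex.norm_real]
    gcongr
    exact e
  · rw [integral_mul_const, integral_const_mul, integral_const_mul]
    simp only [Pi.add_apply]
    rw [integral_add m1.1 m2.1]
    have p : 0 ≤ ‖h‖ ^ (3 / 2 : ℝ) := by positivity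
    calc _ ≤ 12 * (‖h‖ ^ (3 / 2 : ℝ) * (CC + CC)) * M₁ := by gcongr; exacts [m1.2, m2.2]
      _ = _ := by ring

theorem has_fderiv (M₁ : ℝ) (g : ℂ → ℂ) (hg : ContinuousOn g (closedBall (0:ℂ) 1))
    (hgb : ∀ z ∈ ball (0:ℂ) 1, ‖g z‖ ≤ M₁) (z : ℂ) (hz : z ∈ ball (0:ℂ) 1) :
    HasFDerivAt (greenPotential g) ((1 / (2 * Real.pi) : ℝ) • LL (AA g z) (BB g z)) z := by
  unfold greenPotential
  refine HasFDerivAt.fun_const_smul ?_ _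
  rw [hasFDerivAt_iff_isLittleO_nhds_zero]
  have hO : (fun h : ℂ => ‖h‖ ^ (3 / 2 : ℝ)) =o[nhds 0] fun h => h := by
    rw [Asymptotics.isLittleO_iff]
    intro c hc
    have : ∀ᶠ h : ℂ in nhds 0, ‖h‖ < c ^ 2 := by
      have := ball_mem_nhds (0:ℂ) (show 0 < c ^ 2 by positivity)
      filter_upwards [this] with h hh
      simpa using hh
    filter_upwards [this] with h hh
    have e : ‖h‖ ^ (3 / 2 : ℝ) = ‖h‖ * Real.sqrt ‖h‖ := by
      rw [Real.sqrt_eq_rpow, ← Real.rpow_one_add' (norm_nonneg _) (by norm_num)]; norm_num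
    rw [Real.norm_of_nonneg (by positivity), e, mul_comm]
    gcongr
    rw [Real.sqrt_le_left hc.le]; exact hh.le
  refine Asymptotics.IsBigO.trans_isLittleO ?_ hO
  apply Asymptotics.IsBigO.of_bound (24 * CC * M₁)
  have : ∀ᶠ h : ℂ in nhds 0, z + h ∈ ball (0:ℂ) 1 := by
    have hc : Tendsto (fun h : ℂ => z + h) (nhds 0) (nhds z) := by
      have : Continuous (fun h : ℂ => z + h) := by fun_prop
      simpa using this.tendsto 0
    exact hc (isOpen_ball.mem_nhds hz)
  filter_upwards [this] with h hh
  rw [Real.norm_of_nonneg (by positivity)]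
  exact diff_est M₁ g hg hgb z hz h hh

theorem wdz_eq (M₁ : ℝ) (g : ℂ → ℂ) (hg : ContinuousOn g (closedBall (0:ℂ) 1))
    (hgb : ∀ z ∈ ball (0:ℂ) 1, ‖g z‖ ≤ M₁) (z : ℂ) (hz : z ∈ ball (0:ℂ) 1) :
    wdz (greenPotential g) z = (1 / (4 * Real.pi) : ℝ) * AA g z ∧
    wdzbar (greenPotential g) z = (1 / (4 * Real.pi) : ℝ) * BB g z := by
  unfold wdz wdzbar
  rw [(has_fderiv M₁ g hg hgb z hz).fderiv]
  have : (Real.pi : ℂ) ≠ 0 := by exact_mod_cast Real.pi_ne_zero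
  constructor <;> simp [LL] <;> field_simp <;> ring_nf <;> simp <;> ring

theorem ker_diff (z w : ℂ) (hz : z ∈ ball (0:ℂ) 1) (hz0 : z ≠ 0) (hw : w ∈ ball (0:ℂ) 1) (h1 : z ≠ w) (h0 : 0 ≠ w) :
    ‖Ker z w - Ker 0 w‖ ≤ ‖z‖ * (‖z - w‖⁻¹ + ((‖0 - w‖ * max ‖0 - w‖ (‖z‖ / 2))⁻¹ + (‖z - w‖ * max ‖z - w‖ (‖z‖ / 2))⁻¹)) := by
  have a := ne0 z w hz hw
  have b := sub_ne_zero.2 h1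
  have kl := key_le z w hz hw
  have n1 : 0 < ‖z - w‖ := norm_pos_iff.2 b
  have n2 : 0 < ‖w‖ := norm_pos_iff.2 h0.symm
  have nz : 0 < ‖z‖ := norm_pos_iff.2 hz0
  have e : Ker z w - Ker 0 w = z * (-((starRingEnd ℂ) w ^ 2 / (1 - z * (starRingEnd ℂ) w)) - 1 / (w * (z - w))) := by
    unfold Ker
    have := h0.symm
    simp only [zero_mul, sub_zero, zero_sub, div_one]
    generalize (starRingEnd ℂ) w = c at a
    have f1 : -c / (1 - z * c) = -c - z * (c ^ 2 / (1 - z * c)) := by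
      rw [eq_sub_iff_add_eq, ← mul_div_assoc, ← add_div, div_eq_iff a]; ring
    have f2 : 1 / (z - w) = 1 / -w + z * (1 / (w * (z - w))) := by
      field_simp; ring
    rw [f1, f2]; ring
  rw [e, norm_mul, zero_sub, norm_neg]
  gcongr
  refine (norm_sub_le _ _).trans ?_
  gcongr ?_ + ?_
  · rw [norm_neg, norm_div, norm_pow, RCLike.norm_conj, ← one_div]
    rw [mem_ball_zero_iff] at hw
    gcongr
    exact pow_le_one₀ (norm_nonneg _) hw.le
  · rw [norm_div, norm_one, norm_mul, one_div]
    have t : ‖z‖ ≤ ‖z - w‖ + ‖w‖ := by simpa using norm_add_le (z - w) w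
    rcases le_total ‖w‖ ‖z - w‖ with h | h
    · have : max ‖w‖ (‖z‖ / 2) ≤ ‖z - w‖ := max_le h (by linarith)
      have p : 0 ≤ (‖z - w‖ * max ‖z - w‖ (‖z‖ / 2))⁻¹ := by positivity
      have : (‖w‖ * ‖z - w‖)⁻¹ ≤ (‖w‖ * max ‖w‖ (‖z‖ / 2))⁻¹ := by gcongr
      linarith
    · have : max ‖z - w‖ (‖z‖ / 2) ≤ ‖w‖ := max_le h (by linarith)
      have p : 0 ≤ (‖w‖ * max ‖w‖ (‖z‖ / 2))⁻¹ := by positivity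
      have : (‖z - w‖ * ‖w‖)⁻¹ ≤ (‖z - w‖ * max ‖z - w‖ (‖z‖ / 2))⁻¹ := by gcongr
      rw [mul_comm ‖w‖]
      linarith

theorem int_ker (z : ℂ) (hz : z ∈ ball (0:ℂ) 1) (hz0 : z ≠ 0) :
    ∃ F : ℂ → ℝ, IntegrableOn F (ball (0:ℂ) 1) ∧
      (∀ᵐ w ∂(volume.restrict (ball (0:ℂ) 1)), ‖Ker z w - Ker 0 w‖ ≤ F w) ∧
      ∫ w in ball (0:ℂ) 1, F w ≤ ‖z‖ * (8 * Real.pi + 4 * Real.pi * Real.log (4 / ‖z‖)) := by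
  have nz : 0 < ‖z‖ := norm_pos_iff.2 hz0
  have z0 : (0:ℂ) ∈ ball (0:ℂ) 1 := by simp
  obtain ⟨r1, r2⟩ := rad3 ‖z‖ nz (by simpa using hz)
  have pos : ∀ y : ℝ, 0 ≤ y → 0 ≤ (y * max y (‖z‖ / 2))⁻¹ := fun y hy => by positivity
  have i0 := radial_le _ pos r1 0 z0
  have i1 := radial_le _ pos r1 z hz
  have i2 := int1 z hz
  rw [r2] at i0 i1
  refine ⟨_, ((i2.1.add (i0.1.add i1.1)).const_mul ‖z‖), ?_, ?_⟩
  · filter_upwards [ae_ne z, ae_ne 0] with w h1 h2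
    exact ker_diff z w hz hz0 h1.1 h1.2 h2.2
  · rw [integral_const_mul]
    gcongr
    simp only [Pi.add_apply]
    have q1 := integral_add i2.1 (i0.1.add i1.1)
    have q2 := integral_add i0.1 i1.1
    simp only [Pi.add_apply] at q1 q2
    rw [q1, q2]
    linarith [i0.2, i1.2, i2.2]

theorem final_num (r : ℝ) (h0 : 0 < r) (h1 : r < 1) :
    1 / (4 * Real.pi) * (r * (8 * Real.pi + 4 * Real.pi * Real.log (4 / r))) ≤
      (Real.log (4 * (1 + r)) - Real.log r) * (r * (2 + r)) := by
  have e : 1 / (4 * Real.pi) * (r * (8 * Real.pi + 4 * Real.pi * Real.log (4 / r))) = r * (2 + Real.log (4 / r)) := by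
    have := Real.pi_ne_zero
    field_simp; ring
  rw [e, ← Real.log_div (by positivity) h0.ne']
  have l1 : Real.log (4 / r) ≤ Real.log (4 * (1 + r) / r) := by
    apply Real.log_le_log (by positivity)
    gcongr; linarith
  have l2 : 2 ≤ Real.log (4 * (1 + r) / r) := by
    rw [Real.le_log_iff_exp_le (by positivity)]
    have : Real.exp 2 ≤ 8 := by
      have h := Real.exp_one_lt_d9
      have : Real.exp 2 = Real.exp 1 * Real.exp 1 := by rw [← Real.exp_add]; norm_num
      have := Real.exp_pos 1
      nlinarith
    refine this.trans ?_
    rw [le_div_iff₀ h0]; linarith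
  have : r * (2 + Real.log (4 / r)) ≤ r * (2 * Real.log (4 * (1 + r) / r)) := by gcongr; linarith
  nlinarith [mul_pos h0 h0]

theorem final_bound (M₁ : ℝ) (g : ℂ → ℂ) (hgb : ∀ z ∈ ball (0:ℂ) 1, ‖g z‖ ≤ M₁) (z : ℂ)
    (hz : z ∈ ball (0:ℂ) 1) (hz0 : z ≠ 0) (D : ℂ) (k : ℂ → ℂ)
    (hk : ∀ w, ‖k w‖ = ‖Ker z w - Ker 0 w‖)
    (hD : D = (1 / (4 * Real.pi) : ℝ) * ∫ w in ball (0:ℂ) 1, k w * g w) :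
    ‖D‖ ≤ M₁ * (Real.log (4 * (1 + ‖z‖)) - Real.log ‖z‖) * (‖z‖ * (2 + ‖z‖)) := by
  have hM : 0 ≤ M₁ := (norm_nonneg _).trans (hgb 0 (by simp))
  obtain ⟨F, f1, f2, f3⟩ := int_ker z hz hz0
  have nz : 0 < ‖z‖ := norm_pos_iff.2 hz0
  have fn := final_num ‖z‖ nz (by simpa using hz)
  have b : ‖∫ w in ball (0:ℂ) 1, k w * g w‖ ≤ ∫ w in ball (0:ℂ) 1, F w * M₁ := by
    apply norm_integral_le_of_norm_le (f1.mul_const _)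
    filter_upwards [f2, ae_ne 0] with w h1 h2
    rw [norm_mul, hk]
    have := hgb w h2.1
    gcongr
    exact (norm_nonneg _).trans h1
  rw [integral_mul_const] at b
  rw [hD, norm_mul, Complex.norm_real, Real.norm_of_nonneg (by positivity)]
  calc _ ≤ 1 / (4 * Real.pi) * ((‖z‖ * (8 * Real.pi + 4 * Real.pi * Real.log (4 / ‖z‖))) * M₁) := by
        gcongr; refine b.trans ?_; gcongr
    _ = M₁ * (1 / (4 * Real.pi) * (‖z‖ * (8 * Real.pi + 4 * Real.pi * Real.log (4 / ‖z‖)))) := by ring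
    _ ≤ M₁ * ((Real.log (4 * (1 + ‖z‖)) - Real.log ‖z‖) * (‖z‖ * (2 + ‖z‖))) := by gcongr
    _ = _ := by ring

/-- Bounds on the differences of the Wirtinger derivatives of the Green potential. -/
theorem stmt12 (M₁ : ℝ) (g : ℂ → ℂ)
    (hg : ContinuousOn g (closedBall (0:ℂ) 1))
    (hgb : ∀ z ∈ ball (0:ℂ) 1, ‖g z‖ ≤ M₁) :
    ∀ z ∈ ball (0:ℂ) 1, z ≠ 0 →
      ‖wdz (greenPotential g) z - wdz (greenPotential g) 0‖ ≤
        M₁ * (Real.log (4 * (1 + ‖z‖)) - Real.log ‖z‖) * (‖z‖ * (2 + ‖z‖)) ∧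
      ‖wdzbar (greenPotential g) z - wdzbar (greenPotential g) 0‖ ≤
        M₁ * (Real.log (4 * (1 + ‖z‖)) - Real.log ‖z‖) * (‖z‖ * (2 + ‖z‖)) := by
  intro z hz hz0
  have z0 : (0:ℂ) ∈ ball (0:ℂ) 1 := by simp
  have e1 := wdz_eq M₁ g hg hgb z hz
  have e0 := wdz_eq M₁ g hg hgb 0 z0
  have jA : ∀ z ∈ ball (0:ℂ) 1, IntegrableOn (fun w => Ker z w * g w) (ball (0:ℂ) 1) := fun z hz =>
    int_mul M₁ g hg hgb z hz _ (ker_meas z) (fun w hw hne => ker_le _ _ hz hw hne)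
  have jB : ∀ z ∈ ball (0:ℂ) 1, IntegrableOn (fun w => (starRingEnd ℂ) (Ker z w) * g w) (ball (0:ℂ) 1) :=
    fun z hz => int_mul M₁ g hg hgb z hz _ (Complex.continuous_conj.measurable.comp (ker_meas z))
      (fun w hw hne => by simpa using ker_le _ _ hz hw hne)
  constructor
  · apply final_bound M₁ g hgb z hz hz0 _ (fun w => Ker z w - Ker 0 w) (fun w => rfl)
    rw [e1.1, e0.1, ← mul_sub, AA, AA, ← integral_sub (jA z hz) (jA 0 z0)]
    simp only [sub_mul]
  · apply final_bound M₁ g hgb z hz hz0 _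
      (fun w => (starRingEnd ℂ) (Ker z w) - (starRingEnd ℂ) (Ker 0 w))
      (fun w => by rw [← map_sub, RCLike.norm_conj])
    rw [e1.2, e0.2, ← mul_sub, BB, BB, ← integral_sub (jB z hz) (jB 0 z0)]
    simp only [sub_mul]
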